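/- Let A = ℂ[[x,z]]/(z^2) (the local ring O_{2,P} of a primitive double curve at a point). Every finitely generated torsion-free A-module M is isomorphic to a direct sum (⊕_{i=1}^p I_{n_i}) ⊕ m·A ⊕ q·(A/(z)), where I_k denotes the ideal (x^k, z) ⊂ A, for some nonnegative integers m, q, p and positive integers n_1,…,n_p. -/

import Mathlib

/-!
Write `R = ℂ[[x]]`, so that `A = R ⊕ R z`. A finitely generated torsion-free `A`-module `M` is
finitely generated and torsion-free over the discrete valuation ring `R`, hence `R`-free, and its
`A`-structure is recorded by the `R`-linear endomorphism `N = z • ·`, which satisfies `N² = 0`.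

The image of `N` is a submodule of the free module `ker N`. The Smith normal form, with units of
`R` absorbed, gives a basis `e` of `ker N` and vectors `g₁, …, g_r` of `M` with `N gᵢ = x^{aᵢ} eᵢ`
such that the `N gᵢ` form a basis of `im N`. Then `M` is the direct sum of the rank-two blocks
`R gᵢ ⊕ R eᵢ` and of rank-one blocks `R eⱼ` killed by `z` (`exists_normalForm`).

On the other side `I_a = R x^a ⊕ R z` with `z · x^a = x^a · z` and `z · z = 0`, so a rank-two block
is `I_a` (`ideal_equiv`), and a rank-one block is `A/(z)` (`quotient_equiv`). An `R`-linear
isomorphism commuting with `z` is `A`-linear, since `R` and `z` generate `A`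
(`isDualNumbers_quotient`). Finally `I_0 = A`, so the blocks with `aᵢ = 0` are the free summands.

Only two facts are used: `R` is a discrete valuation ring with uniformizer `x`, and `A` is the ring
of dual numbers over `R`. The argument is therefore written for any such `R`, with uniformizer `ϖ`
(`exists_decomposition`).
-/

/-!
STATEMENT 6: over `A = ℂ[[x,z]]/(z²)`, every finitely generated torsion-free `A`-module
is isomorphic to `(⊕_{i=1}^p I_{n_i}) ⊕ m·A ⊕ q·(A/(z))` where `I_k = (x^k, z)` and the
`n_i` are positive integers.
-/

open Polynomial

noncomputable section

/-- `R = ℂ[[x]]`. -/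
abbrev Rx : Type := PowerSeries ℂ

/-- `A = ℂ[[x]][z]/(z²)`, the local ring `𝒪_{2,P}` of a primitive double curve. -/
abbrev A2 : Type := Rx[X] ⧸ Ideal.span {(X : Rx[X]) ^ 2}

/-- the class `z` in `A`. -/
def zq : A2 := Ideal.Quotient.mk _ (X : Rx[X])

/-- the element `x` in `A`. -/
def xq : A2 := Ideal.Quotient.mk _ (C PowerSeries.X : Rx[X])

/-- `B = A/(z) ≅ ℂ[[x]]`. -/
abbrev Bq : Type := A2 ⧸ Ideal.span {zq}

/-- the ideal `I_k = (x^k, z) ⊂ A`. -/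
def Iq (k : ℕ) : Ideal A2 := Ideal.span {xq ^ k, zq}

/-- a module is torsion free if no nonzero element is annihilated by a power of `x`. -/
def IsTorsionFree (M : Type) [AddCommGroup M] [Module A2 M] : Prop :=
  ∀ (m : M) (k : ℕ), xq ^ k • m = 0 → m = 0

/-- `A` is the ring of dual numbers over `R` with square-zero generator `z`: every element is
uniquely of the form `u + v z` with `u, v ∈ R`. -/
structure IsDualNumbers (R : Type) {A : Type} [CommRing R] [CommRing A] [Algebra R A] (z : A) :
    Prop where
  mul_self : z * z = 0
  exists_eq : ∀ y : A, ∃ u v : R, y = algebraMap R A u + algebraMap R A v * z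
  eq_zero : ∀ {u v : R}, algebraMap R A u + algebraMap R A v * z = 0 → u = 0 ∧ v = 0

/-- `R[X]/(X²)` is the ring of dual numbers over `R`; the two coefficients are read off through
the homomorphism to Mathlib's `DualNumber R`. -/
lemma isDualNumbers_quotient (R : Type) [CommRing R] :
    IsDualNumbers R (Ideal.Quotient.mk (Ideal.span {(X : R[X]) ^ 2}) X) := by
  have hz : Ideal.Quotient.mk (Ideal.span {(X : R[X]) ^ 2}) X *
      Ideal.Quotient.mk (Ideal.span {(X : R[X]) ^ 2}) X = 0 := by
    rw [← map_mul, ← pow_two]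
    exact Ideal.Quotient.eq_zero_iff_mem.mpr (Ideal.mem_span_singleton_self _)
  refine ⟨hz, fun y => ?_, fun {u v} h => ?_⟩
  · obtain ⟨f, rfl⟩ := Ideal.Quotient.mk_surjective y
    induction f using Polynomial.induction_on' with
    | add p q hp hq =>
      obtain ⟨u, v, h⟩ := hp
      obtain ⟨u', v', h'⟩ := hq
      refine ⟨u + u', v + v', ?_⟩
      rw [map_add, h, h', map_add, map_add]
      ring
    | monomial n c =>
      have h : Ideal.Quotient.mk (Ideal.span {(X : R[X]) ^ 2}) (monomial n c)
          = algebraMap R _ c * (Ideal.Quotient.mk (Ideal.span {(X : R[X]) ^ 2}) X) ^ n := by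
        rw [← C_mul_X_pow_eq_monomial, map_mul, map_pow]; rfl
      rw [h]
      match n with
      | 0 => exact ⟨c, 0, by simp⟩
      | 1 => exact ⟨0, c, by simp⟩
      | n + 2 => exact ⟨0, 0, by rw [pow_add, pow_two (Ideal.Quotient.mk _ _), hz]; simp⟩
  · let δ : R[X] ⧸ Ideal.span {(X : R[X]) ^ 2} →+* DualNumber R :=
      Ideal.Quotient.lift _ (Polynomial.eval₂RingHom (algebraMap R (DualNumber R)) DualNumber.eps)
        (by
          intro f hf
          obtain ⟨g, rfl⟩ := Ideal.mem_span_singleton.mp hf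
          simp [pow_two])
    have hδz : δ (Ideal.Quotient.mk _ X) = DualNumber.eps := by simp [δ]
    have hδ : ∀ u, δ (algebraMap R _ u) = algebraMap R (DualNumber R) u := by
      intro u
      change δ (Ideal.Quotient.mk _ (C u)) = _
      simp [δ]
    have := congrArg δ h
    rw [map_add, map_mul, hδz, hδ, hδ, map_zero] at this
    have h1 := congrArg TrivSqZeroExt.fst this
    have h2 := congrArg TrivSqZeroExt.snd this
    simp [TrivSqZeroExt.algebraMap_eq_inl] at h1 h2
    exact ⟨h1, h2⟩

section DualNumbers

variable {R A : Type} [CommRing R] [CommRing A] [Algebra R A] {z : A}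

lemma IsDualNumbers.finite (hA : IsDualNumbers R z) : Module.Finite R A := by
  refine Module.Finite.of_surjective
    ((LinearMap.toSpanSingleton R A 1).coprod (LinearMap.toSpanSingleton R A z)) ?_
  intro y
  obtain ⟨u, v, rfl⟩ := hA.exists_eq y
  exact ⟨(u, v), by simp [Algebra.smul_def]⟩

/-- `I_k = (ϖ^k, z)` is `R ϖ^k ⊕ R z`, with `z` acting by `ϖ^k ↦ ϖ^k z` and `z ↦ 0`. -/
lemma ideal_equiv [IsDomain R] (hA : IsDualNumbers R z) {ϖ : R} (hϖ : ϖ ≠ 0) (k : ℕ) :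
    ∃ φ : (R × R) ≃ₗ[R] Ideal.span {algebraMap R A ϖ ^ k, z},
    ∀ u, z • φ u = φ (0, ϖ ^ k * u.1) := by
  have hx : algebraMap R A ϖ ^ k ∈ (Ideal.span {algebraMap R A ϖ ^ k, z}) := Ideal.subset_span (by simp)
  have hz : z ∈ (Ideal.span {algebraMap R A ϖ ^ k, z}) := Ideal.subset_span (by simp)
  let φ : (R × R) →ₗ[R] (Ideal.span {algebraMap R A ϖ ^ k, z}) :=
    (LinearMap.toSpanSingleton R (Ideal.span {algebraMap R A ϖ ^ k, z}) ⟨_, hx⟩).coprod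
      (LinearMap.toSpanSingleton R (Ideal.span {algebraMap R A ϖ ^ k, z}) ⟨_, hz⟩)
  have hφ : ∀ u, (φ u : A) =
      algebraMap R A u.1 * algebraMap R A ϖ ^ k + algebraMap R A u.2 * z := by
    intro u
    simp [φ, Algebra.smul_def]
  have hb : Function.Bijective φ := by
    constructor
    · rw [injective_iff_map_eq_zero]
      rintro ⟨u, v⟩ h
      have h' : (φ (u, v) : A) = 0 := by rw [h]; rfl
      rw [hφ, ← map_pow (algebraMap R A), ← map_mul] at h'
      obtain ⟨h1, h2⟩ := hA.eq_zero h'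
      have h3 : u = 0 := by simpa [hϖ] using h1
      exact Prod.ext h3 h2
    · rintro ⟨y, hy⟩
      obtain ⟨p, q, rfl⟩ := Ideal.mem_span_pair.mp hy
      obtain ⟨p0, p1, rfl⟩ := hA.exists_eq p
      obtain ⟨q0, q1, rfl⟩ := hA.exists_eq q
      refine ⟨(p0, p1 * ϖ ^ k + q0), Subtype.ext ?_⟩
      rw [hφ, map_add, map_mul, map_pow (algebraMap R A)]
      linear_combination (-(algebraMap R A q1)) * hA.mul_self
  refine ⟨LinearEquiv.ofBijective φ hb, fun u => Subtype.ext ?_⟩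
  change z * (φ u : A) = (φ _ : A)
  rw [hφ, hφ, map_mul, map_pow (algebraMap R A), map_zero]
  linear_combination (algebraMap R A u.2) * hA.mul_self

/-- `A/(z)` is free of rank one over `R` and killed by `z`. -/
lemma quotient_equiv (hA : IsDualNumbers R z) :
    ∃ φ : R ≃ₗ[R] (A ⧸ Ideal.span {z}), ∀ u, z • φ u = 0 := by
  have hz : (Ideal.Quotient.mk (Ideal.span {z}) z) = 0 :=
    Ideal.Quotient.eq_zero_iff_mem.mpr (Ideal.mem_span_singleton_self _)
  let φ : R →ₗ[R] (A ⧸ Ideal.span {z}) := LinearMap.toSpanSingleton R (A ⧸ Ideal.span {z}) 1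
  have hφ : ∀ u, φ u = Ideal.Quotient.mk (Ideal.span {z}) (algebraMap R A u) := by
    intro u
    simp only [φ, LinearMap.toSpanSingleton_apply, Algebra.smul_def, mul_one]
    rfl
  have hb : Function.Bijective φ := by
    constructor
    · rw [injective_iff_map_eq_zero]
      intro u h
      rw [hφ, Ideal.Quotient.eq_zero_iff_mem, Ideal.mem_span_singleton'] at h
      obtain ⟨p, hp⟩ := h
      obtain ⟨p0, p1, rfl⟩ := hA.exists_eq p
      refine (hA.eq_zero (u := u) (v := -p0) ?_).1
      rw [← hp, map_neg]
      linear_combination (algebraMap R A p1) * hA.mul_self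
    · intro y
      obtain ⟨y, rfl⟩ := Ideal.Quotient.mk_surjective y
      obtain ⟨u, v, rfl⟩ := hA.exists_eq y
      exact ⟨u, by rw [hφ, map_add, map_mul, hz, mul_zero, add_zero]⟩
  refine ⟨LinearEquiv.ofBijective φ hb, fun u => ?_⟩
  change z • φ u = 0
  rw [hφ, Algebra.smul_def]
  change Ideal.Quotient.mk (Ideal.span {z}) z * _ = 0
  rw [hz, zero_mul]

/-- Normal form of a square-zero endomorphism `N` of a finite free module over a discrete valuation ring:
a direct sum of rank-two blocks `(u, v) ↦ (0, ϖ^a u)` and of rank-one zero blocks. -/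
lemma exists_normalForm [IsDomain R] [IsDiscreteValuationRing R] {ϖ : R} (hϖ : Irreducible ϖ)
    (M : Type) [AddCommGroup M] [Module R M] [Module.Finite R M]
    [Module.IsTorsionFree R M] (N : M →ₗ[R] M) (hN : ∀ y, N (N y) = 0) :
    ∃ (r q : ℕ) (a : Fin r → ℕ) (φ : ((Fin r → R × R) × (Fin q → R)) ≃ₗ[R] M),
      ∀ u, N (φ u) = φ (fun i => (0, ϖ ^ a i * (u.1 i).1), 0) := by
  classical
  let N' : M →ₗ[R] N.ker := N.codRestrict N.ker hN
  have hN' : ∀ y, (N' y : M) = N y := fun y => rfl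
  obtain ⟨r, snf⟩ := (LinearMap.range N').smithNormalForm (Module.Free.chooseBasis R N.ker)
  have ha0 : ∀ i, snf.a i ≠ 0 := by
    intro i h
    have := snf.snf i
    rw [h, zero_smul] at this
    exact snf.bN.ne_zero i (Subtype.ext this)
  choose a w hw using fun i =>
    IsDiscreteValuationRing.eq_unit_mul_pow_irreducible (ha0 i) hϖ
  choose g' hg' using fun i => (snf.bN i).2
  -- Dividing by the unit `w i` normalises the `i`-th invariant factor to a power of `ϖ`.
  let g : Fin r → M := fun i => ((w i)⁻¹ : Rˣ) • g' i
  have hwg : ∀ i, (w i : R) • N' (g i) = snf.bN i := by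
    intro i
    rw [← hg' i, ← map_smul]
    congr 1
    exact smul_inv_smul (w i) (g' i)
  obtain ⟨q, σ, hσ⟩ : ∃ (q : ℕ) (σ : Fin r ⊕ Fin q ≃ _), ∀ i, σ (Sum.inl i) = snf.f i := by
    refine ⟨Fintype.card {j // ¬ j ∈ Set.range snf.f},
      (Equiv.sumCongr (Equiv.ofInjective snf.f snf.f.injective)
        (Fintype.equivFin _).symm).trans (Equiv.sumCompl (· ∈ Set.range snf.f)), ?_⟩
    intro i
    simp
  let e := snf.bM.reindex σ.symm
  have hge : ∀ i, N' (g i) = (ϖ ^ a i : R) • e (Sum.inl i) := by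
    intro i
    have h1 : (w i : R) • N' (g i) = (w i : R) • (ϖ ^ a i : R) • e (Sum.inl i) := by
      rw [hwg, snf.snf, smul_smul, ← hw]
      simp [e, hσ]
    exact (MulAction.injective (w i)) h1
  let φ : ((Fin r → R × R) × (Fin q → R)) →ₗ[R] M :=
    { toFun := fun u => ∑ i, (u.1 i).1 • g i +
        ((∑ i, (u.1 i).2 • e (Sum.inl i) + ∑ j, u.2 j • e (Sum.inr j) : N.ker) : M)
      map_add' := by
        intro u v
        simp only [Prod.fst_add, Prod.snd_add, Pi.add_apply, add_smul, Finset.sum_add_distrib,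
          Submodule.coe_add]
        abel
      map_smul' := by
        intro c u
        simp only [Prod.smul_fst, Prod.smul_snd, Pi.smul_apply, smul_eq_mul, mul_smul,
          ← Finset.smul_sum, ← smul_add, Submodule.coe_smul, RingHom.id_apply] }
  have hφ : ∀ u, φ u = ∑ i, (u.1 i).1 • g i +
        ((∑ i, (u.1 i).2 • e (Sum.inl i) + ∑ j, u.2 j • e (Sum.inr j) : N.ker) : M) :=
    fun u => rfl
  have hker : ∀ k : N.ker, N' (k : M) = 0 := fun k => Subtype.ext k.2
  have hNφ : ∀ u, N' (φ u) = ∑ i, (ϖ ^ a i * (u.1 i).1) • e (Sum.inl i) := by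
    intro u
    rw [hφ, map_add, hker, add_zero, map_sum]
    refine Finset.sum_congr rfl fun i _ => ?_
    rw [map_smul, hge, smul_smul, mul_comm]
  have he : ∀ c : Fin r ⊕ Fin q → R,
      (∑ i, c (Sum.inl i) • e (Sum.inl i) + ∑ j, c (Sum.inr j) • e (Sum.inr j) : N.ker) = 0 →
      ∀ s, c s = 0 := by
    intro c hc
    rw [← Fintype.sum_sum_type (fun s => c s • e s)] at hc
    exact Fintype.linearIndependent_iff.mp e.linearIndependent c hc
  have hb : Function.Bijective φ := by
    constructor
    · rw [injective_iff_map_eq_zero]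
      rintro u hu
      -- Applying `N` isolates the coefficients of the `g i`.
      have h1 := hNφ u
      rw [hu, map_zero] at h1
      have h2 := he (Sum.elim (fun i => ϖ ^ a i * (u.1 i).1) 0)
        (by simpa using h1.symm)
      have h3 : ∀ i, (u.1 i).1 = 0 := by
        intro i
        simpa [hϖ.ne_zero] using h2 (Sum.inl i)
      rw [hφ] at hu
      simp only [h3, zero_smul, Finset.sum_const_zero, zero_add, ZeroMemClass.coe_eq_zero] at hu
      have h4 := he (Sum.elim (fun i => (u.1 i).2) u.2) hu
      refine Prod.ext (funext fun i => Prod.ext (h3 i) (h4 (Sum.inl i)))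
        (funext fun j => h4 (Sum.inr j))
    · intro y
      let c := snf.bN.repr ⟨N' y, LinearMap.mem_range_self N' y⟩
      have hc : N' y = ∑ i, (c i * w i) • N' (g i) := by
        have := congrArg (fun t : LinearMap.range N' => (t : N.ker))
          (snf.bN.sum_repr ⟨N' y, LinearMap.mem_range_self N' y⟩)
        simp only [Submodule.coe_sum, Submodule.coe_smul] at this
        rw [← this]
        refine Finset.sum_congr rfl fun i _ => ?_
        rw [mul_smul, hwg]
      have hk : y - ∑ i, (c i * w i) • g i ∈ N.ker := by
        have : N' (y - ∑ i, (c i * w i) • g i) = 0 := by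
          rw [map_sub, map_sum, hc, sub_eq_zero]
          exact Finset.sum_congr rfl fun i _ => (map_smul _ _ _).symm
        exact congrArg Subtype.val this
      have hd := e.sum_repr ⟨_, hk⟩
      rw [Fintype.sum_sum_type] at hd
      refine ⟨(fun i => (c i * w i, e.repr ⟨_, hk⟩ (Sum.inl i)),
        fun j => e.repr ⟨_, hk⟩ (Sum.inr j)), ?_⟩
      rw [hφ]
      simp only [hd]
      abel
  refine ⟨r, q, a, LinearEquiv.ofBijective φ hb, fun u => ?_⟩
  change N (φ u) = φ _
  rw [← hN', hNφ, hφ]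
  simp

/-- The classification over the dual numbers of an arbitrary discrete valuation ring, for modules
without torsion with respect to the uniformizer. -/
theorem exists_decomposition [IsDomain R] [IsDiscreteValuationRing R] {ϖ : R} (hϖ : Irreducible ϖ)
    (hA : IsDualNumbers R z) (M : Type) [AddCommGroup M] [Module A M] [Module.Finite A M]
    (hM : ∀ (m : M) (k : ℕ), algebraMap R A ϖ ^ k • m = 0 → m = 0) :
    ∃ (p m q : ℕ) (nn : Fin p → ℕ), (∀ i, 1 ≤ nn i) ∧
      Nonempty (M ≃ₗ[A] (((i : Fin p) → ↥(Ideal.span {algebraMap R A ϖ ^ nn i, z})) ×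
        (Fin m → A) × (Fin q → (A ⧸ Ideal.span {z})))) := by
  let _ : Module R M := Module.compHom M (algebraMap R A)
  have hsm : ∀ (u : R) (y : M), u • y = algebraMap R A u • y := fun _ _ => rfl
  have : IsScalarTower R A M := IsScalarTower.of_algebraMap_smul fun r y => (hsm r y).symm
  have := hA.finite
  have : Module.Finite R M := Module.Finite.trans A M
  have : Module.IsTorsionFree R M := by
    rw [Module.isTorsionFree_iff_smul_eq_zero]
    intro u y h
    by_cases hu : u = 0
    · exact Or.inl hu
    -- Up to a unit, `u` is a power of `ϖ`, so `hM` applies.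
    obtain ⟨k, w, rfl⟩ :=
      IsDiscreteValuationRing.eq_unit_mul_pow_irreducible hu hϖ
    right
    rw [mul_smul] at h
    have h' : (ϖ ^ k : R) • y = 0 := (smul_eq_zero_iff_eq w).mp h
    rw [hsm, map_pow (algebraMap R A)] at h'
    exact hM y k h'
  let N : M →ₗ[R] M := (LinearMap.lsmul A M z).restrictScalars R
  obtain ⟨r, q, a, φ, hφ⟩ := exists_normalForm hϖ M N (fun y => by
    change z • z • y = 0
    rw [smul_smul, hA.mul_self, zero_smul])
  choose ψ hψ using ideal_equiv hA hϖ.ne_zero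
  obtain ⟨β, hβ⟩ := quotient_equiv hA
  let Ψ : ((Fin r → R × R) × (Fin q → R)) ≃ₗ[R]
      ((i : Fin r) → Ideal.span {algebraMap R A ϖ ^ a i, z}) × (Fin q → (A ⧸ Ideal.span {z})) :=
    (LinearEquiv.piCongrRight fun i => ψ (a i)).prodCongr (LinearEquiv.piCongrRight fun _ => β)
  have hΨ : ∀ u, z • Ψ u = Ψ (fun i => (0, ϖ ^ a i * (u.1 i).1), 0) := by
    intro u
    refine Prod.ext (funext fun i => hψ (a i) (u.1 i)) (funext fun j => ?_)
    exact (hβ (u.2 j)).trans (map_zero β).symm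
  let θ := φ.symm.trans Ψ
  have hθ : ∀ y, θ (z • y) = z • θ y := by
    intro y
    obtain ⟨u, rfl⟩ := φ.surjective y
    have h1 : z • φ u = φ _ := hφ u
    simp only [θ, LinearEquiv.trans_apply, LinearEquiv.symm_apply_apply, h1, hΨ]
  let Θ : M ≃ₗ[A]
      ((i : Fin r) → Ideal.span {algebraMap R A ϖ ^ a i, z}) × (Fin q → (A ⧸ Ideal.span {z})) :=
    { θ.toAddEquiv with
      map_smul' := by
        intro s y
        change θ (s • y) = s • θ y
        obtain ⟨u, v, rfl⟩ := hA.exists_eq s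
        rw [add_smul, add_smul, map_add, mul_smul, mul_smul, ← hsm, ← hsm, map_smul, map_smul, hθ,
          algebraMap_smul, algebraMap_smul] }
  -- The blocks with exponent `0` are the free summands; the others are the ideals `I_k`, `k ≥ 1`.
  let E : Fin (Fintype.card {i // 1 ≤ a i}) ⊕ Fin (Fintype.card {i // ¬ 1 ≤ a i}) ≃ Fin r :=
    ((Fintype.equivFin _).symm.sumCongr (Fintype.equivFin _).symm).trans
      (Equiv.sumCompl fun i => 1 ≤ a i)
  have hE0 : ∀ j, a (E (Sum.inr j)) = 0 := by
    intro j
    have := ((Fintype.equivFin {i // ¬ 1 ≤ a i}).symm j).2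
    have h : E (Sum.inr j) = ((Fintype.equivFin {i // ¬ 1 ≤ a i}).symm j : Fin r) := rfl
    rw [h]
    omega
  have htop : ∀ j, Ideal.span {algebraMap R A ϖ ^ a (E (Sum.inr j)), z} = ⊤ := by
    intro j
    rw [hE0, Ideal.eq_top_iff_one]
    exact Ideal.subset_span (by simp)
  let S : ((i : Fin r) → Ideal.span {algebraMap R A ϖ ^ a i, z}) ≃ₗ[A]
      ((i : Fin _) → Ideal.span {algebraMap R A ϖ ^ a (E (Sum.inl i)), z}) × (Fin _ → A) :=
    (LinearEquiv.piCongrLeft A (fun i => Ideal.span {algebraMap R A ϖ ^ a i, z}) E).symm.trans <|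
      (LinearEquiv.sumPiEquivProdPi A _ _
          (fun s => Ideal.span {algebraMap R A ϖ ^ a (E s), z})).trans <|
        (LinearEquiv.refl A _).prodCongr <| LinearEquiv.piCongrRight fun j =>
          LinearEquiv.ofTop _ (htop j)
  refine ⟨_, _, q, fun i => a (E (Sum.inl i)), fun i => ?_,
    ⟨Θ.trans ((S.prodCongr (LinearEquiv.refl A _)).trans (LinearEquiv.prodAssoc A _ _ _))⟩⟩
  exact ((Fintype.equivFin {i // 1 ≤ a i}).symm i).2

end DualNumbers

theorem stmt_6 (M : Type) [AddCommGroup M] [Module A2 M] [Module.Finite A2 M]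
    (hM : IsTorsionFree M) :
    ∃ (p m q : ℕ) (nn : Fin p → ℕ), (∀ i, 1 ≤ nn i) ∧
      Nonempty (M ≃ₗ[A2]
        (((i : Fin p) → ↥(Iq (nn i))) × (Fin m → A2) × (Fin q → Bq))) := by
  exact exists_decomposition (R := Rx) (A := A2) PowerSeries.X_irreducible
    (isDualNumbers_quotient Rx) M hM
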